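/- Let n ≥ 2, let x₀ ∈ ℝⁿ, R > 0, and let B = B_R(x₀) be the closed ball of radius R centred at x₀, with open interior B°. Let a : B × ℝ → ℝ be C² with a(x,0) = 0 and ∂_μ a(x,μ) ≥ 0 for all (x,μ) ∈ B × ℝ. Suppose there exist a C² function F : ℝ → ℝ and constants δ, ε > 0 with F(0) = 0, F'(μ) ≥ 0 for all μ ∈ ℝ, |F(μ)| ≥ δ|μ|^{1+ε} for all μ ∈ ℝ, and such that F(μ) ≤ a(x,μ) for all x ∈ B and μ ≥ 0, while a(x,μ) ≤ F(μ) for all x ∈ B and μ ≤ 0. Then there exists a constant C > 0 such that every function u : B → ℝ that is continuous on B, twice continuously differentiable on B°, and satisfies −Δu(x) + a(x,u(x)) = 0 for all x ∈ B°, obeys |u(x₀)| ≤ C. In particular C is independent of the boundary values of u. -/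

import Mathlib

/-!
The bound is the Keller–Osserman estimate. With `ρ(x) = R² - |x - x₀|²` and `p = 2/ε`, the barrier
`A ρ^{-p}` blows up on the boundary of the ball and satisfies `Δ(A ρ^{-p}) ≤ δ (A ρ^{-p})^{1+ε}`
once `A` is large. Instead of comparing `u` with a fixed barrier, let `M` be the maximum of
`u ρ^p` over the closed ball. If `u(x₀) > A R^{-2p}`, then `M > A > 0`, so the maximum is attained
at an interior point `y`, where the barrier `M ρ^{-p}` touches `u` from above. The second-derivative
test along coordinate lines (`lap_le_of_touching`) bounds `Δu(y)` by the Laplacian of this barrier,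
while the equation gives `Δu(y) ≥ F(u(y)) ≥ δ u(y)^{1+ε}`; these are incompatible for `M > A`
(`keller_osserman_upper`). Applying the bound to `u` and to `-u` gives the theorem.
-/

open Set Metric

/-- The Euclidean Laplacian `Δu(x) = ∑ i, ∂²u/∂xᵢ²(x)`. -/
noncomputable def lap {n : ℕ} (u : EuclideanSpace ℝ (Fin n) → ℝ)
    (x : EuclideanSpace ℝ (Fin n)) : ℝ :=
  ∑ i : Fin n,
    fderiv ℝ (fun y => fderiv ℝ u y (EuclideanSpace.single i 1)) x (EuclideanSpace.single i 1)

open Filter Topology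

/-- Second-order necessary condition at an interior maximum, with `g` a derivative of `f` near
the point. -/
lemma second_deriv_nonpos_of_isLocalMax {f g : ℝ → ℝ} {d t₀ : ℝ}
    (hf : ∀ᶠ t in 𝓝 t₀, HasDerivAt f (g t) t) (hg : HasDerivAt g d t₀)
    (hmax : IsLocalMax f t₀) : d ≤ 0 := by
  by_contra! hd
  have heq : deriv f =ᶠ[𝓝 t₀] g := hf.mono fun t ht => ht.deriv
  have h2 : deriv (deriv f) t₀ = d := by rw [heq.deriv_eq, hg.deriv]
  -- A positive second derivative makes `t₀` a local minimum as well, so `f` is locally constant.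
  have hmin : IsLocalMin f t₀ :=
    isLocalMin_of_deriv_deriv_pos (by rw [h2]; exact hd) hmax.deriv_eq_zero
      hf.self_of_nhds.continuousAt
  have hconst : f =ᶠ[𝓝 t₀] fun _ => f t₀ := by
    filter_upwards [hmax, hmin] with t h1 h2 using le_antisymm h1 h2
  have h0 : deriv (deriv f) t₀ = 0 := by
    rw [hconst.deriv.deriv_eq]; simp
  linarith

/-- The second derivative of the barrier `M ρ^{-p}` along a line, on which `ρ` is the quadratic
polynomial `ρ₀ - 2 c t - t²`. -/
lemma hasDerivAt_barrier_line (M p ρ₀ c : ℝ) (hρ : 0 < ρ₀) :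
    (∀ᶠ t in 𝓝 (0 : ℝ), HasDerivAt (fun t : ℝ => M * (ρ₀ - 2 * c * t - t ^ 2) ^ (-p))
      (M * p * (2 * c + 2 * t) * (ρ₀ - 2 * c * t - t ^ 2) ^ (-p - 1)) t) ∧
    HasDerivAt (fun t : ℝ => M * p * (2 * c + 2 * t) * (ρ₀ - 2 * c * t - t ^ 2) ^ (-p - 1))
      (M * p * (2 * ρ₀ ^ (-p - 1) + 4 * (p + 1) * c ^ 2 * ρ₀ ^ (-p - 2))) 0 := by
  have hq : ∀ t : ℝ, HasDerivAt (fun t : ℝ => ρ₀ - 2 * c * t - t ^ 2) (-(2 * c + 2 * t)) t := by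
    intro t
    have h := (((hasDerivAt_id t).const_mul (2 * c)).const_sub ρ₀).sub (hasDerivAt_pow 2 t)
    refine h.congr_deriv ?_
    simp; ring
  constructor
  · have hc : ContinuousAt (fun t : ℝ => ρ₀ - 2 * c * t - t ^ 2) 0 := (hq 0).continuousAt
    have hpos : ∀ᶠ t in 𝓝 (0 : ℝ), 0 < ρ₀ - 2 * c * t - t ^ 2 :=
      hc.eventually (lt_mem_nhds (by simpa using hρ))
    filter_upwards [hpos] with t ht
    refine (((hq t).rpow_const (p := -p) (Or.inl ht.ne')).const_mul M).congr_deriv ?_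
    ring
  · have h1 := (hq 0).rpow_const (p := -p - 1) (Or.inl (by simpa using hρ.ne'))
    have h2 : HasDerivAt (fun t : ℝ => M * p * (2 * c + 2 * t)) (M * p * 2) 0 := by
      have h := (((hasDerivAt_id (0 : ℝ)).const_mul 2).const_add (2 * c)).const_mul (M * p)
      refine h.congr_deriv ?_
      simp
    refine (h2.mul h1).congr_deriv ?_
    have e : -p - 1 - 1 = -p - 2 := by ring
    simp only [mul_zero, sub_zero, add_zero, ne_eq, OfNat.ofNat_ne_zero, not_false_eq_true,
      zero_pow, e]
    ring

/-- Derivatives of a `C²` function restricted to a line. -/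
lemma hasDerivAt_line {n : ℕ} {u : EuclideanSpace ℝ (Fin n) → ℝ}
    {s : Set (EuclideanSpace ℝ (Fin n))} (hs : IsOpen s) (hu : ContDiffOn ℝ 2 u s)
    {y : EuclideanSpace ℝ (Fin n)} (hy : y ∈ s) (e : EuclideanSpace ℝ (Fin n)) :
    (∀ᶠ t in 𝓝 (0 : ℝ), HasDerivAt (fun t : ℝ => u (y + t • e)) (fderiv ℝ u (y + t • e) e) t) ∧
    HasDerivAt (fun t : ℝ => fderiv ℝ u (y + t • e) e)
      (fderiv ℝ (fun z => fderiv ℝ u z e) y e) 0 := by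
  have hl : ∀ t : ℝ, HasDerivAt (fun t : ℝ => y + t • e) e t := by
    intro t
    simpa using ((hasDerivAt_id t).smul_const e).const_add y
  constructor
  · have hmem : ∀ᶠ t in 𝓝 (0 : ℝ), y + t • e ∈ s :=
      (hl 0).continuousAt.eventually (hs.mem_nhds (by simpa using hy))
    filter_upwards [hmem] with t ht
    have hd : DifferentiableAt ℝ u (y + t • e) :=
      (hu.contDiffAt (hs.mem_nhds ht)).differentiableAt (by norm_num)
    exact hd.hasFDerivAt.comp_hasDerivAt t (hl t)
  · have h1 : ContDiffAt ℝ 1 (fderiv ℝ u) y :=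
      (hu.contDiffAt (hs.mem_nhds hy)).fderiv_right (by norm_num)
    have h2 : DifferentiableAt ℝ (fun z => fderiv ℝ u z e) y :=
      (h1.differentiableAt (by norm_num)).clm_apply (differentiableAt_const e)
    have h3 : HasFDerivAt (fun z => fderiv ℝ u z e)
        (fderiv ℝ (fun z => fderiv ℝ u z e) y) (y + (0 : ℝ) • e) := by
      simpa using h2.hasFDerivAt
    exact h3.comp_hasDerivAt 0 (hl 0)

/-- Comparison with the barrier at a touching point: if `M ρ^{-p}`, with `ρ = R² - |x - x₀|²`,
lies above `u` near `y` and equals `u` at `y`, then `Δu(y)` is at most the Laplacian of the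
barrier, which is bounded by a multiple of `ρ(y)^{-p-2}`. -/
lemma lap_le_of_touching {n : ℕ} {x₀ y : EuclideanSpace ℝ (Fin n)} {R M p : ℝ}
    (hM : 0 ≤ M) (hp : 0 ≤ p) {u : EuclideanSpace ℝ (Fin n) → ℝ}
    (hu : ContDiffOn ℝ 2 u (ball x₀ R)) (hy : y ∈ ball x₀ R)
    (hle : ∀ x ∈ ball x₀ R, u x ≤ M * (R ^ 2 - ‖x - x₀‖ ^ 2) ^ (-p))
    (heq : u y = M * (R ^ 2 - ‖y - x₀‖ ^ 2) ^ (-p)) :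
    lap u y ≤ M * p * (2 * n + 4 * (p + 1)) * R ^ 2 * (R ^ 2 - ‖y - x₀‖ ^ 2) ^ (-p - 2) := by
  have hyR : ‖y - x₀‖ < R := by simpa [dist_eq_norm] using hy
  set ρ := R ^ 2 - ‖y - x₀‖ ^ 2 with hρdef
  have hρ : 0 < ρ := by nlinarith [norm_nonneg (y - x₀)]
  have hcoord : ∀ i : Fin n,
      fderiv ℝ (fun z => fderiv ℝ u z (EuclideanSpace.single i 1)) y (EuclideanSpace.single i 1)
        ≤ M * p * (2 * ρ ^ (-p - 1) + 4 * (p + 1) * ((y - x₀) i) ^ 2 * ρ ^ (-p - 2)) := by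
    intro i
    set e : EuclideanSpace ℝ (Fin n) := EuclideanSpace.single i 1 with he
    obtain ⟨hu1, hu2⟩ := hasDerivAt_line isOpen_ball hu hy e
    obtain ⟨hw1, hw2⟩ := hasDerivAt_barrier_line M p ρ ((y - x₀) i) hρ
    have hline : ∀ t : ℝ, R ^ 2 - ‖y + t • e - x₀‖ ^ 2
        = ρ - 2 * ((y - x₀) i) * t - t ^ 2 := by
      intro t
      have h1 : y + t • e - x₀ = (y - x₀) + t • e := by abel
      have h2 : inner ℝ (y - x₀) e = (y - x₀) i := by
        rw [he, EuclideanSpace.inner_single_right]; simp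
      have h3 : ‖e‖ = 1 := by rw [he]; simp
      rw [h1, norm_add_sq_real, inner_smul_right, h2, norm_smul, h3, hρdef, mul_one,
        Real.norm_eq_abs, sq_abs]
      ring
    have hmem : ∀ᶠ t in 𝓝 (0 : ℝ), y + t • e ∈ ball x₀ R := by
      have hc : ContinuousAt (fun t : ℝ => y + t • e) 0 := by fun_prop
      exact hc.eventually (isOpen_ball.mem_nhds (by simpa using hy))
    have hmax : IsLocalMax (fun t : ℝ => u (y + t • e)
        - M * (ρ - 2 * ((y - x₀) i) * t - t ^ 2) ^ (-p)) 0 := by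
      filter_upwards [hmem] with t ht
      have h1 := hle _ ht
      rw [hline] at h1
      simp only [zero_smul, add_zero, mul_zero, sub_zero, ne_eq, OfNat.ofNat_ne_zero,
        not_false_eq_true, zero_pow]
      linarith
    have := second_deriv_nonpos_of_isLocalMax
      (by filter_upwards [hu1, hw1] with t h1 h2 using h1.sub h2) (hu2.sub hw2) hmax
    linarith
  have hnorm : ∑ i, ((y - x₀) i) ^ 2 = ‖y - x₀‖ ^ 2 := by
    rw [EuclideanSpace.norm_sq_eq]; simp
  have hpow : ρ ^ (-p - 1) = ρ * ρ ^ (-p - 2) := by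
    rw [show -p - 1 = 1 + (-p - 2) by ring, Real.rpow_add hρ, Real.rpow_one]
  have hsum : lap u y ≤ M * p * ρ ^ (-p - 2) * (2 * n * ρ + 4 * (p + 1) * ‖y - x₀‖ ^ 2) := by
    calc lap u y ≤ ∑ i : Fin n,
          M * p * (2 * ρ ^ (-p - 1) + 4 * (p + 1) * ((y - x₀) i) ^ 2 * ρ ^ (-p - 2)) :=
          Finset.sum_le_sum fun i _ => hcoord i
      _ = _ := by
          rw [← Finset.mul_sum, Finset.sum_add_distrib, ← Finset.sum_mul Finset.univ
            (fun i => 4 * (p + 1) * ((y - x₀) i) ^ 2), ← Finset.mul_sum, ← Finset.mul_sum, hnorm, hpow]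
          simp only [Finset.sum_const, Finset.card_univ, Fintype.card_fin, nsmul_eq_mul]
          ring
  have hρ2 : 0 < ρ ^ (-p - 2) := Real.rpow_pos_of_pos hρ _
  have hb : 2 * n * ρ + 4 * (p + 1) * ‖y - x₀‖ ^ 2 ≤ (2 * n + 4 * (p + 1)) * R ^ 2 := by
    have h1 : ρ ≤ R ^ 2 := by nlinarith [sq_nonneg ‖y - x₀‖]
    have h2 : ‖y - x₀‖ ^ 2 ≤ R ^ 2 := by linarith
    rw [add_mul]
    gcongr
  calc lap u y ≤ _ := hsum
    _ ≤ M * p * ρ ^ (-p - 2) * ((2 * n + 4 * (p + 1)) * R ^ 2) := by gcongr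
    _ = _ := by ring

/-- The one-sided Keller–Osserman bound for subsolutions of `Δu = δ u^{1+ε}` where `u > 0`. -/
lemma keller_osserman_upper {n : ℕ} {x₀ : EuclideanSpace ℝ (Fin n)} {R δ ε : ℝ} (hR : 0 < R)
    (hδ : 0 < δ) (hε : 0 < ε) :
    ∃ C : ℝ, 0 < C ∧ ∀ u : EuclideanSpace ℝ (Fin n) → ℝ,
      ContinuousOn u (closedBall x₀ R) → ContDiffOn ℝ 2 u (ball x₀ R) →
      (∀ x ∈ ball x₀ R, 0 < u x → δ * u x ^ (1 + ε) ≤ lap u x) → u x₀ ≤ C := by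
  -- This exponent makes `(ρ^{-p})^{1+ε}` scale exactly like `ρ^{-p-2}`.
  obtain ⟨p, hpdef⟩ : ∃ p : ℝ, p = 2 / ε := ⟨_, rfl⟩
  have hp : 0 < p := by rw [hpdef]; positivity
  have hpε : p * ε = 2 := by rw [hpdef]; field_simp
  obtain ⟨K, hK⟩ : ∃ K : ℝ, K = p * (2 * n + 4 * (p + 1)) * R ^ 2 := ⟨_, rfl⟩
  have hKpos : 0 < K := by rw [hK]; positivity
  -- The amplitude solves `δ A^ε = K`, so that `A ρ^{-p}` is a supersolution.
  obtain ⟨A, hA⟩ : ∃ A : ℝ, A = (K / δ) ^ (1 / ε) := ⟨_, rfl⟩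
  have hApos : 0 < A := by rw [hA]; positivity
  have hAε : A ^ ε = K / δ := by
    rw [hA, ← Real.rpow_mul (by positivity), one_div_mul_cancel hε.ne', Real.rpow_one]
  refine ⟨A * (R ^ 2) ^ (-p), by positivity, fun u huc hu2 hsub => ?_⟩
  by_contra! hlt
  have hcont : ContinuousOn (fun x => u x * (R ^ 2 - ‖x - x₀‖ ^ 2) ^ p) (closedBall x₀ R) := by
    refine huc.mul (Continuous.continuousOn ?_)
    exact Continuous.rpow_const (by fun_prop) fun _ => Or.inr hp.le
  obtain ⟨y, hyB, hymax⟩ := (isCompact_closedBall x₀ R).exists_isMaxOn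
    ⟨x₀, mem_closedBall_self hR.le⟩ hcont
  obtain ⟨M, hM⟩ : ∃ M : ℝ, M = u y * (R ^ 2 - ‖y - x₀‖ ^ 2) ^ p := ⟨_, rfl⟩
  have hmax : ∀ x ∈ closedBall x₀ R, u x * (R ^ 2 - ‖x - x₀‖ ^ 2) ^ p ≤ M := by
    intro x hx; rw [hM]; exact hymax hx
  have hAM : A < M := by
    have h := hmax x₀ (mem_closedBall_self hR.le)
    simp only [sub_self, norm_zero, ne_eq, OfNat.ofNat_ne_zero, not_false_eq_true, zero_pow,
      sub_zero] at h
    have hR2 : 0 < (R ^ 2) ^ p := by positivity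
    rw [Real.rpow_neg (by positivity), ← div_eq_mul_inv, div_lt_iff₀ hR2] at hlt
    linarith
  have hMpos : 0 < M := hApos.trans hAM
  have hy : y ∈ ball x₀ R := by
    rw [mem_ball, dist_eq_norm]
    rw [mem_closedBall, dist_eq_norm] at hyB
    refine lt_of_le_of_ne hyB fun h => ?_
    rw [h, sub_self, Real.zero_rpow hp.ne', mul_zero] at hM
    linarith
  have hρpos : ∀ x ∈ ball x₀ R, 0 < R ^ 2 - ‖x - x₀‖ ^ 2 := by
    intro x hx
    rw [mem_ball, dist_eq_norm] at hx
    nlinarith [norm_nonneg (x - x₀)]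
  have hρ := hρpos y hy
  have heq : u y = M * (R ^ 2 - ‖y - x₀‖ ^ 2) ^ (-p) := by
    rw [hM, mul_assoc, ← Real.rpow_add hρ]; simp
  have hlap := lap_le_of_touching hMpos.le hp.le hu2 hy (fun x hx => by
    have h := hmax x (ball_subset_closedBall hx)
    rw [Real.rpow_neg (hρpos x hx).le, ← div_eq_mul_inv,
      le_div_iff₀ (Real.rpow_pos_of_pos (hρpos x hx) _)]
    exact h) heq
  have huy : 0 < u y := by rw [heq]; positivity
  have hs := hsub y hy huy
  set ρ := R ^ 2 - ‖y - x₀‖ ^ 2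
  have hpow : u y ^ (1 + ε) = M * M ^ ε * ρ ^ (-p - 2) := by
    rw [heq, Real.mul_rpow hMpos.le (by positivity), ← Real.rpow_mul hρ.le,
      Real.rpow_add hMpos, Real.rpow_one,
      show -p * (1 + ε) = -p - 2 by linarith]
  have hMε : K / δ < M ^ ε := by
    rw [← hAε]; exact Real.rpow_lt_rpow hApos.le hAM hε
  rw [div_lt_iff₀ hδ] at hMε
  have hpos : 0 < M * ρ ^ (-p - 2) := by positivity
  have hfin : (M * ρ ^ (-p - 2)) * (M ^ ε * δ) ≤ (M * ρ ^ (-p - 2)) * K := by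
    rw [hK]
    calc _ = δ * u y ^ (1 + ε) := by rw [hpow]; ring
      _ ≤ _ := hs.trans hlap
      _ = _ := by ring
  exact absurd (le_of_mul_le_mul_left hfin hpos) (not_le.mpr hMε)

lemma lap_neg {n : ℕ} (u : EuclideanSpace ℝ (Fin n) → ℝ) (x : EuclideanSpace ℝ (Fin n)) :
    lap (fun y => -u y) x = -lap u x := by
  simp [lap, fderiv_fun_neg]

theorem stmt_2 (n : ℕ) (hn : 2 ≤ n) (x₀ : EuclideanSpace ℝ (Fin n)) (R : ℝ) (hR : 0 < R)
    (a : EuclideanSpace ℝ (Fin n) × ℝ → ℝ)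
    (ha : ContDiffOn ℝ 2 a (closedBall x₀ R ×ˢ (univ : Set ℝ)))
    (ha0 : ∀ x ∈ closedBall x₀ R, a (x, 0) = 0)
    (hamono : ∀ x ∈ closedBall x₀ R, ∀ μ : ℝ, 0 ≤ deriv (fun t => a (x, t)) μ)
    (F : ℝ → ℝ) (δ ε : ℝ) (hδ : 0 < δ) (hε : 0 < ε)
    (hF : ContDiff ℝ 2 F) (hF0 : F 0 = 0)
    (hFmono : ∀ μ : ℝ, 0 ≤ deriv F μ)
    (hFgrow : ∀ μ : ℝ, δ * |μ| ^ (1 + ε) ≤ |F μ|)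
    (hlow : ∀ x ∈ closedBall x₀ R, ∀ μ : ℝ, 0 ≤ μ → F μ ≤ a (x, μ))
    (hupp : ∀ x ∈ closedBall x₀ R, ∀ μ : ℝ, μ ≤ 0 → a (x, μ) ≤ F μ) :
    ∃ C : ℝ, 0 < C ∧
      ∀ u : EuclideanSpace ℝ (Fin n) → ℝ,
        ContinuousOn u (closedBall x₀ R) → ContDiffOn ℝ 2 u (ball x₀ R) →
        (∀ x ∈ ball x₀ R, -lap u x + a (x, u x) = 0) →
        |u x₀| ≤ C := by
  have hFm : Monotone F :=
    monotone_of_deriv_nonneg (hF.differentiable (by norm_num)) hFmono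
  obtain ⟨C, hC, hmain⟩ := keller_osserman_upper (x₀ := x₀) hR hδ hε
  refine ⟨C, hC, fun u huc hu2 heq => abs_le.mpr ⟨?_, ?_⟩⟩
  · have h := hmain (fun y => -u y) huc.neg hu2.neg (fun x hx hpos => by
      have hneg : u x < 0 := by linarith
      have h1 := hFgrow (u x)
      have h2 : F (u x) ≤ 0 := hF0 ▸ hFm hneg.le
      rw [abs_of_neg hneg, abs_of_nonpos h2] at h1
      have h3 := hupp x (ball_subset_closedBall hx) (u x) hneg.le
      have h4 := heq x hx
      rw [lap_neg]
      linarith)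
    linarith
  · exact hmain u huc hu2 (fun x hx hpos => by
      have h1 := hFgrow (u x)
      have h2 : 0 ≤ F (u x) := hF0 ▸ hFm hpos.le
      rw [abs_of_pos hpos, abs_of_nonneg h2] at h1
      have h3 := hlow x (ball_subset_closedBall hx) (u x) hpos.le
      have h4 := heq x hx
      linarith)
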